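/- Let β̂ be the elastic-net estimator and β* ∈ ℝ^p be nonzero with support H = {j : β*_j ≠ 0} and d* = |H|. Let ζ > 1 and q ≥ 1, assume ‖ℓ̇(β*) + 2λ₂·β*‖_∞ ≤ ((ζ−1)/(ζ+1))·λ₁, assume C(ζ,H,ℓ̈(β*)) > 0 and C_q(ζ,H,ℓ̈(β*)) > 0, and set τ = K·(ζ+1)·d*·λ₁ / (2·C(ζ,H,ℓ̈(β*))²). If τ ≤ (1/2)·e^{−1} and a_τ ∈ [0, 1/2] satisfies a_τ·exp(−2a_τ) = τ, then ‖β̂ − β*‖_q ≤ 2·exp(2a_τ)·ζ·d*^{1/q}·λ₁ / ((ζ+1)·C_q(ζ,H,ℓ̈(β*))). -/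

import Mathlib

open Real BigOperators Finset MeasureTheory

/-- Inner product of a row of the design matrix with a coefficient vector. -/
def dotp {p : ℕ} (u v : Fin p → ℝ) : ℝ := ∑ j, u j * v j

/-- Average negative binomial negative log-likelihood. -/
noncomputable def negLogLik (n p : ℕ) (θ : ℝ) (x : Fin n → Fin p → ℝ)
    (y : Fin n → ℝ) (β : Fin p → ℝ) : ℝ :=
  -(1 / (n : ℝ)) *
    ∑ i, (y i * dotp (x i) β - (θ + y i) * Real.log (θ + Real.exp (dotp (x i) β)))

/-- Elastic-net objective function. -/
noncomputable def enObj (n p : ℕ) (θ : ℝ) (x : Fin n → Fin p → ℝ) (y : Fin n → ℝ)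
    (lam1 lam2 : ℝ) (β : Fin p → ℝ) : ℝ :=
  negLogLik n p θ x y β + lam1 * ∑ j, |β j| + lam2 * ∑ j, (β j) ^ 2

/-- `j`-th component of the gradient of the average negative log-likelihood. -/
noncomputable def gradComp (n p : ℕ) (θ : ℝ) (x : Fin n → Fin p → ℝ) (y : Fin n → ℝ)
    (β : Fin p → ℝ) (j : Fin p) : ℝ :=
  (1 / (n : ℝ)) *
    ∑ i, x i j * θ * (Real.exp (dotp (x i) β) - y i) / (θ + Real.exp (dotp (x i) β))

/-- The quadratic form `bᵀ ℓ̈(β) b` of the Hessian of the average negative log-likelihood. -/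
noncomputable def hessQuad (n p : ℕ) (θ : ℝ) (x : Fin n → Fin p → ℝ) (y : Fin n → ℝ)
    (β b : Fin p → ℝ) : ℝ :=
  (1 / (n : ℝ)) *
    ∑ i, (dotp (x i) b) ^ 2 *
      (θ * (θ + y i) * Real.exp (dotp (x i) β) / (θ + Real.exp (dotp (x i) β)) ^ 2)

/-- The compatibility factor `C(ζ,H,Σ)` of the quadratic form `Q = bᵀΣb`,
over the cone `S(ζ,H) = {b : ‖b_{Hᶜ}‖₁ ≤ ζ‖b_H‖₁}`. -/
noncomputable def compatFactor (p : ℕ) (ζ : ℝ) (H : Finset (Fin p))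
    (Q : (Fin p → ℝ) → ℝ) : ℝ :=
  sInf {r : ℝ | ∃ b : Fin p → ℝ, b ≠ 0 ∧
    (∑ j ∈ Hᶜ, |b j|) ≤ ζ * ∑ j ∈ H, |b j| ∧
    r = Real.sqrt ((H.card : ℝ) * Q b) / ∑ j ∈ H, |b j|}

/-- The `ℓ_q` norm `(∑ⱼ |bⱼ|^q)^{1/q}`. -/
noncomputable def lqNorm (p : ℕ) (q : ℝ) (b : Fin p → ℝ) : ℝ :=
  (∑ j, |b j| ^ q) ^ (1 / q)

/-- The weak cone invertibility factor `C_q(ζ,H,Σ)` of the quadratic form `Q = bᵀΣb`,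
over the cone `S(ζ,H) = {b : ‖b_{Hᶜ}‖₁ ≤ ζ‖b_H‖₁}`. -/
noncomputable def weakCIF (p : ℕ) (ζ q : ℝ) (H : Finset (Fin p))
    (Q : (Fin p → ℝ) → ℝ) : ℝ :=
  sInf {r : ℝ | ∃ b : Fin p → ℝ, b ≠ 0 ∧
    (∑ j ∈ Hᶜ, |b j|) ≤ ζ * ∑ j ∈ H, |b j| ∧
    r = (H.card : ℝ) ^ (1 / q) * Q b / ((∑ j ∈ H, |b j|) * lqNorm p q b)}

lemma nb_core (θ E u h y : ℝ) (hθ : 0 < θ) (hE : 0 < E) (hy : 0 ≤ y)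
    (hh : h = θ * (θ + y) * E / (θ + E) ^ 2) :
    h * (|u| * (1 - Real.exp (-|u|))) ≤
      u * (θ * (E * Real.exp u - y) / (θ + E * Real.exp u) - θ * (E - y) / (θ + E)) := by
  have hX := Real.exp_pos u
  have h1 : θ * (E * Real.exp u - y) / (θ + E * Real.exp u) - θ * (E - y) / (θ + E)
      = θ * (θ + y) * E * (Real.exp u - 1) / ((θ + E * Real.exp u) * (θ + E)) := by
    field_simp
    ring
  rw [h1, hh]
  have hc : 0 < θ * (θ + y) * E := by positivity
  set c := θ * (θ + y) * E
  rcases le_total 0 u with hu | hu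
  · rw [abs_of_nonneg hu, Real.exp_neg]
    have h1X : 1 ≤ Real.exp u := Real.one_le_exp hu
    set X := Real.exp u
    have key : (1 - X⁻¹) / (θ + E) ^ 2 ≤ (X - 1) / ((θ + E * X) * (θ + E)) := by
      rw [div_le_div_iff₀ (by positivity) (by positivity)]
      have : 1 - X⁻¹ = (X - 1) / X := by field_simp
      rw [this, div_mul_eq_mul_div, div_le_iff₀ hX]
      have e : (X - 1) * (θ + E) ^ 2 * X - (X - 1) * ((θ + E * X) * (θ + E))
          = (X - 1) * (X - 1) * (θ * (θ + E)) := by ring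
      have : 0 ≤ (X - 1) * (X - 1) * (θ * (θ + E)) :=
        mul_nonneg (mul_self_nonneg _) (by positivity)
      linarith
    have := mul_le_mul_of_nonneg_left key (mul_nonneg hu hc.le)
    calc _ = u * c * ((1 - X⁻¹) / (θ + E) ^ 2) := by ring
      _ ≤ _ := this
      _ = _ := by ring
  · rw [abs_of_nonpos hu, neg_neg]
    have h1X : Real.exp u ≤ 1 := Real.exp_le_one_iff.2 hu
    set X := Real.exp u
    have key : (1 - X) / (θ + E) ^ 2 ≤ (1 - X) / ((θ + E * X) * (θ + E)) := by
      apply div_le_div_of_nonneg_left (by linarith) (by positivity)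
      rw [sq]
      apply mul_le_mul_of_nonneg_right _ (by positivity)
      nlinarith
    have := mul_le_mul_of_nonneg_left key (mul_nonneg (neg_nonneg.2 hu) hc.le)
    calc _ = -u * c * ((1 - X) / (θ + E) ^ 2) := by ring
      _ ≤ _ := this
      _ = _ := by ring

lemma exp_aux (v w : ℝ) (hv : 0 ≤ v) (hvw : v ≤ w) :
    v ^ 2 * (1 - Real.exp (-w)) ≤ w * (v * (1 - Real.exp (-v))) := by
  -- concavity of `1 - exp (-·)`
  rcases hv.eq_or_lt with h0 | h0
  · subst h0; simp
  have hw : 0 < w := lt_of_lt_of_le h0 hvw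
  have q1 : 0 ≤ v / w := by positivity
  have q2 : 0 ≤ 1 - v / w := by rw [sub_nonneg, div_le_one hw]; exact hvw
  have hc := convexOn_exp.2 (Set.mem_univ (-w)) (Set.mem_univ (0:ℝ)) q1 q2 (by ring)
  simp only [smul_eq_mul, mul_zero, add_zero, Real.exp_zero, mul_one] at hc
  have e : v / w * -w = -v := by field_simp
  rw [e] at hc
  have : v * (1 - Real.exp (-w)) ≤ w * (1 - Real.exp (-v)) := by
    have h2 := mul_le_mul_of_nonneg_left hc hw.le
    have e2 : w * (v / w * Real.exp (-w) + (1 - v / w)) = v * Real.exp (-w) + (w - v) := by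
      field_simp
    rw [e2] at h2
    linarith
  nlinarith

lemma one_sub_exp_ge (v : ℝ) : v * Real.exp (-v) ≤ 1 - Real.exp (-v) := by
  have h := Real.add_one_le_exp v
  have h2 : Real.exp v * Real.exp (-v) = 1 := by rw [← Real.exp_add]; simp
  nlinarith [Real.exp_pos (-v)]

lemma dotp_line {p : ℕ} (u β b : Fin p → ℝ) (t : ℝ) :
    dotp u (fun j => β j - t * b j) = dotp u β - t * dotp u b := by
  simp only [dotp, mul_sum, ← sum_sub_distrib]
  exact sum_congr rfl fun j _ => by ring

lemma hasDeriv_nll (n p : ℕ) (θ : ℝ) (hθ : 0 < θ) (x : Fin n → Fin p → ℝ)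
    (y : Fin n → ℝ) (β b : Fin p → ℝ) :
    HasDerivAt (fun t : ℝ => negLogLik n p θ x y (fun j => β j - t * b j))
      (-∑ j, b j * gradComp n p θ x y β j) 0 := by
  have hi : ∀ i ∈ (univ : Finset (Fin n)), HasDerivAt
      (fun t : ℝ => y i * (dotp (x i) β - t * dotp (x i) b) - (θ + y i) *
        Real.log (θ + Real.exp (dotp (x i) β - t * dotp (x i) b)))
      (dotp (x i) b * (θ * (Real.exp (dotp (x i) β) - y i) / (θ + Real.exp (dotp (x i) β)))) 0 := by
    intro i _
    have h1 : HasDerivAt (fun t : ℝ => dotp (x i) β - t * dotp (x i) b) (-dotp (x i) b) 0 := by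
      simpa using ((hasDerivAt_id (0:ℝ)).mul_const (dotp (x i) b)).const_sub (dotp (x i) β)
    have hpos : 0 < θ + Real.exp (dotp (x i) β) := by positivity
    have h2 := (h1.exp.const_add θ).log (by simpa using hpos.ne')
    have h3 := (h1.const_mul (y i)).sub (h2.const_mul (θ + y i))
    refine h3.congr_deriv ?_
    simp only [zero_mul, sub_zero]
    field_simp
    ring
  have hs := (HasDerivAt.fun_sum hi).const_mul (-(1 / (n:ℝ)))
  have e : (fun t : ℝ => negLogLik n p θ x y (fun j => β j - t * b j)) =
      fun t : ℝ => -(1 / (n:ℝ)) * ∑ i, (y i * (dotp (x i) β - t * dotp (x i) b) - (θ + y i) *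
        Real.log (θ + Real.exp (dotp (x i) β - t * dotp (x i) b))) := by
    funext t
    simp only [negLogLik, dotp_line]
  rw [e]
  refine hs.congr_deriv ?_
  rw [neg_mul]
  congr 1
  simp only [gradComp, dotp, mul_sum, sum_mul]
  rw [sum_comm]
  refine sum_congr rfl fun j _ => sum_congr rfl fun i _ => by ring

lemma kkt (n p : ℕ) (θ : ℝ) (hθ : 0 < θ) (x : Fin n → Fin p → ℝ) (y : Fin n → ℝ)
    (lam1 lam2 : ℝ) (hlam1 : 0 < lam1) (betah betas : Fin p → ℝ)
    (hmin : ∀ β : Fin p → ℝ,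
      enObj n p θ x y lam1 lam2 betah ≤ enObj n p θ x y lam1 lam2 β) :
    ∑ j, (betah j - betas j) * (gradComp n p θ x y betah j + 2 * lam2 * betah j)
      ≤ lam1 * (∑ j, |betas j| - ∑ j, |betah j|) := by
  set b : Fin p → ℝ := fun j => betah j - betas j with hb
  set c := lam1 * (∑ j, |betas j| - ∑ j, |betah j|) with hc
  have h1 := hasDeriv_nll n p θ hθ x y betah b
  have h2 : HasDerivAt (fun t : ℝ => lam2 * ∑ j, (betah j - t * b j) ^ 2)
      (lam2 * ∑ j, -(2 * betah j * b j)) 0 := by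
    apply HasDerivAt.const_mul
    apply HasDerivAt.fun_sum
    intro j _
    have h := (((hasDerivAt_id (0:ℝ)).mul_const (b j)).const_sub (betah j)).pow 2
    refine h.congr_deriv ?_
    simp
  have h3 := (h1.add h2).add ((hasDerivAt_id (0:ℝ)).mul_const c)
  have h4 := h3.tendsto_slope_zero_right
  have h5 : 0 ≤ -∑ j, b j * gradComp n p θ x y betah j + lam2 * ∑ j, -(2 * betah j * b j) + 1 * c := by
    refine ge_of_tendsto h4 ?_
    filter_upwards [Ioo_mem_nhdsGT (show (0:ℝ) < 1 by norm_num)] with t ht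
    obtain ⟨ht0, ht1⟩ := ht
    have hm := hmin (fun j => betah j - t * b j)
    have hl1 : ∑ j, |betah j - t * b j| ≤ (1 - t) * ∑ j, |betah j| + t * ∑ j, |betas j| := by
      rw [mul_sum, mul_sum, ← sum_add_distrib]
      refine sum_le_sum fun j _ => ?_
      have : betah j - t * b j = (1 - t) * betah j + t * betas j := by simp only [hb]; ring
      rw [this]
      refine (abs_add_le _ _).trans ?_
      rw [abs_mul, abs_mul, abs_of_pos ht0, abs_of_nonneg (by linarith : (0:ℝ) ≤ 1 - t)]
    have hl2 := mul_le_mul_of_nonneg_left hl1 hlam1.le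
    simp only [enObj] at hm
    simp only [Pi.add_apply, id, zero_add, zero_mul, sub_zero, smul_eq_mul, add_zero]
    apply mul_nonneg (by positivity)
    have : lam1 * ((1 - t) * ∑ j, |betah j| + t * ∑ j, |betas j|)
      = lam1 * ∑ j, |betah j| + t * c := by rw [hc]; ring
    linarith
  have e : ∑ j, b j * (gradComp n p θ x y betah j + 2 * lam2 * betah j)
      = ∑ j, b j * gradComp n p θ x y betah j - lam2 * ∑ j, -(2 * betah j * b j) := by
    rw [mul_sum, ← sum_sub_distrib]
    exact sum_congr rfl fun j _ => by ring
  rw [e]; linarith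

lemma hessQuad_nonneg (n p : ℕ) (θ : ℝ) (hθ : 0 < θ) (x : Fin n → Fin p → ℝ) (y : Fin n → ℝ)
    (hy : ∀ i, 0 ≤ y i) (β b : Fin p → ℝ) : 0 ≤ hessQuad n p θ x y β b := by
  unfold hessQuad
  refine mul_nonneg (by positivity) (sum_nonneg fun i _ => ?_)
  have := hy i
  positivity

lemma grad_lower (n p : ℕ) (θ : ℝ) (hθ : 0 < θ) (x : Fin n → Fin p → ℝ) (y : Fin n → ℝ)
    (hy : ∀ i, 0 ≤ y i) (K : ℝ) (hKub : ∀ i j, |x i j| ≤ K) (β β' : Fin p → ℝ) :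
    hessQuad n p θ x y β (fun j => β' j - β j) *
        (1 - Real.exp (-(K * ∑ j, |β' j - β j|))) ≤
      (K * ∑ j, |β' j - β j|) *
        ∑ j, (β' j - β j) * (gradComp n p θ x y β' j - gradComp n p θ x y β j) := by
  set b : Fin p → ℝ := fun j => β' j - β j with hb
  set w := K * ∑ j, |β' j - β j| with hw
  have hu : ∀ i, |dotp (x i) b| ≤ w := by
    intro i
    rw [hw, mul_sum]
    refine (abs_sum_le_sum_abs _ _).trans (sum_le_sum fun j _ => ?_)
    rw [abs_mul]
    exact mul_le_mul_of_nonneg_right (hKub i j) (abs_nonneg _)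
  have hd : ∀ i, dotp (x i) β' = dotp (x i) β + dotp (x i) b := by
    intro i
    simp only [dotp, ← sum_add_distrib, hb]
    exact sum_congr rfl fun j _ => by ring
  have e : ∑ j, (β' j - β j) * (gradComp n p θ x y β' j - gradComp n p θ x y β j)
      = (1 / (n:ℝ)) * ∑ i, dotp (x i) b *
        (θ * (Real.exp (dotp (x i) β') - y i) / (θ + Real.exp (dotp (x i) β')) -
         θ * (Real.exp (dotp (x i) β) - y i) / (θ + Real.exp (dotp (x i) β))) := by
    have hr : ∀ i, dotp (x i) b = ∑ j, x i j * (β' j - β j) := fun i => rfl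
    simp only [gradComp, ← mul_sub, ← sum_sub_distrib, hr, mul_sum, sum_mul]
    rw [sum_comm]
    refine sum_congr rfl fun j _ => sum_congr rfl fun i _ => by ring
  rw [e]
  unfold hessQuad
  rw [mul_assoc, sum_mul, mul_left_comm w, mul_sum _ _ w]
  have hn0 : 0 ≤ 1 / (n : ℝ) := by positivity
  refine mul_le_mul_of_nonneg_left (sum_le_sum fun i _ => ?_) hn0
  have hc := nb_core θ (Real.exp (dotp (x i) β)) (dotp (x i) b) _ (y i) hθ (Real.exp_pos _) (hy i) rfl
  rw [← Real.exp_add, ← hd i] at hc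
  have hx := exp_aux |dotp (x i) b| w (abs_nonneg _) (hu i)
  rw [sq_abs] at hx
  have hyi := hy i
  have hhp : 0 ≤ θ * (θ + y i) * Real.exp (dotp (x i) β) / (θ + Real.exp (dotp (x i) β)) ^ 2 := by
    positivity
  have hw0 : 0 ≤ w := (abs_nonneg _).trans (hu i)
  have a1 := mul_le_mul_of_nonneg_left hx hhp
  have a2 := mul_le_mul_of_nonneg_left hc hw0
  set h := θ * (θ + y i) * Real.exp (dotp (x i) β) / (θ + Real.exp (dotp (x i) β)) ^ 2
  linarith

theorem stmt6
    (n p : ℕ) (hn : 1 ≤ n) (hp : 1 ≤ p)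
    (θ : ℝ) (hθ : 0 < θ)
    (x : Fin n → Fin p → ℝ) (y : Fin n → ℝ) (hy : ∀ i, 0 ≤ y i)
    (lam1 lam2 : ℝ) (hlam1 : 0 < lam1) (hlam2 : 0 < lam2)
    (betah : Fin p → ℝ)
    (hmin : ∀ β : Fin p → ℝ,
      enObj n p θ x y lam1 lam2 betah ≤ enObj n p θ x y lam1 lam2 β)
    (betas : Fin p → ℝ) (hbs : betas ≠ 0)
    (H : Finset (Fin p)) (hH : H = Finset.univ.filter (fun j => betas j ≠ 0))
    (K : ℝ) (hKub : ∀ i j, |x i j| ≤ K) (hKmax : ∃ i j, |x i j| = K)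
    (ζ q : ℝ) (hζ : 1 < ζ) (hq : 1 ≤ q)
    (hevent : ∀ j, |gradComp n p θ x y betas j + 2 * lam2 * betas j|
        ≤ (ζ - 1) / (ζ + 1) * lam1)
    (Cf : ℝ) (hCf : Cf = compatFactor p ζ H (hessQuad n p θ x y betas))
    (hCfpos : 0 < Cf)
    (Cq : ℝ) (hCq : Cq = weakCIF p ζ q H (hessQuad n p θ x y betas))
    (hCqpos : 0 < Cq)
    (τ : ℝ) (hτ : τ = K * (ζ + 1) * (H.card : ℝ) * lam1 / (2 * Cf ^ 2))
    (hτle : τ ≤ (1 / 2) * Real.exp (-1))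
    (aτ : ℝ) (haτ0 : 0 ≤ aτ) (haτ2 : aτ ≤ 1 / 2)
    (haτeq : aτ * Real.exp (-2 * aτ) = τ) :
    lqNorm p q (fun j => betah j - betas j)
      ≤ 2 * Real.exp (2 * aτ) * ζ * (H.card : ℝ) ^ (1 / q) * lam1 / ((ζ + 1) * Cq) := by
  set b : Fin p → ℝ := fun j => betah j - betas j with hb
  have hd0 : 0 < (H.card : ℝ) := by
    obtain ⟨j, hj⟩ := Function.ne_iff.1 hbs
    have : j ∈ H := by rw [hH]; simpa using hj
    exact_mod_cast Finset.card_pos.2 ⟨j, this⟩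
  have hK0 : 0 ≤ K := by
    obtain ⟨i, j, h⟩ := hKmax
    rw [← h]; exact abs_nonneg _
  have hz1 : 0 < ζ + 1 := by linarith
  by_cases hb0 : b = 0
  · rw [hb0]
    have : lqNorm p q (0 : Fin p → ℝ) = 0 := by
      unfold lqNorm
      have hq0 : q ≠ 0 := by linarith
      simp [Real.zero_rpow hq0, Real.zero_rpow (inv_ne_zero hq0)]
    rw [this]
    have : 0 < ζ := by linarith
    positivity
  set N := ∑ j, |betah j - betas j| with hN
  set h := ∑ j ∈ H, |b j| with hh
  set g := ∑ j ∈ Hᶜ, |b j| with hg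
  have hsplit : h + g = N := by
    rw [hh, hg, Finset.sum_add_sum_compl]
  have hh0 : 0 ≤ h := sum_nonneg fun _ _ => abs_nonneg _
  have hg0 : 0 ≤ g := sum_nonneg fun _ _ => abs_nonneg _
  set Q := hessQuad n p θ x y betas with hQ
  have hQ0 : ∀ v, 0 ≤ Q v := fun v => hessQuad_nonneg n p θ hθ x y hy betas v
  have hk := kkt n p θ hθ x y lam1 lam2 hlam1 betah betas hmin
  have hlow := grad_lower n p θ hθ x y hy K hKub betas betah
  set D := ∑ j, (betah j - betas j) * (gradComp n p θ x y betah j - gradComp n p θ x y betas j)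
    with hD
  -- penalty difference
  have hpen : ∑ j, |betas j| - ∑ j, |betah j| ≤ h - g := by
    rw [← Finset.sum_add_sum_compl H (fun j => |betas j|),
      ← Finset.sum_add_sum_compl H (fun j => |betah j|)]
    have e1 : ∑ j ∈ Hᶜ, |betas j| = 0 := by
      refine sum_eq_zero fun j hj => ?_
      rw [hH] at hj
      simp at hj
      simp [hj]
    have e2 : ∑ j ∈ Hᶜ, |betah j| = g := by
      refine sum_congr rfl fun j hj => ?_
      rw [hH] at hj
      simp at hj
      simp [hb, hj]
    have e3 : ∑ j ∈ H, |betas j| ≤ h + ∑ j ∈ H, |betah j| := by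
      rw [hh, ← sum_add_distrib]
      refine sum_le_sum fun j _ => ?_
      have := abs_sub_abs_le_abs_sub (betas j) (betah j)
      rw [abs_sub_comm] at this
      simp only [hb]; linarith
    linarith
  have hnoise : -((ζ - 1) / (ζ + 1) * lam1 * N) ≤
      ∑ j, (betah j - betas j) * (gradComp n p θ x y betas j + 2 * lam2 * betas j) := by
    rw [hN, mul_sum, ← sum_neg_distrib]
    refine sum_le_sum fun j _ => ?_
    have h1 := mul_le_mul_of_nonneg_left (hevent j) (abs_nonneg (betah j - betas j))
    rw [← abs_mul] at h1
    have := neg_abs_le ((betah j - betas j) * (gradComp n p θ x y betas j + 2 * lam2 * betas j))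
    linarith
  have hDb : D + 2 * lam2 * ∑ j, (betah j - betas j) ^ 2 =
      ∑ j, (betah j - betas j) * (gradComp n p θ x y betah j + 2 * lam2 * betah j) -
      ∑ j, (betah j - betas j) * (gradComp n p θ x y betas j + 2 * lam2 * betas j) := by
    rw [hD, mul_sum, ← sum_add_distrib, ← sum_sub_distrib]
    exact sum_congr rfl fun j _ => by ring
  have hsq : 0 ≤ 2 * lam2 * ∑ j, (betah j - betas j) ^ 2 :=
    mul_nonneg (by linarith) (sum_nonneg fun _ _ => sq_nonneg _)
  have hDle : D ≤ 2 * lam1 / (ζ + 1) * (ζ * h - g) := by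
    have h1 := mul_le_mul_of_nonneg_left hpen hlam1.le
    have h2 : D ≤ lam1 * (h - g) + (ζ - 1) / (ζ + 1) * lam1 * N := by linarith
    refine h2.trans (le_of_eq ?_)
    rw [← hsplit]
    field_simp
    ring
  have hN0 : 0 ≤ N := sum_nonneg fun _ _ => abs_nonneg _
  have hNpos : 0 < N := by
    rcases hN0.eq_or_lt with h0 | h0
    · exfalso
      apply hb0
      funext j
      have := (sum_eq_zero_iff_of_nonneg (fun j _ => abs_nonneg (betah j - betas j))).1 h0.symm j
        (mem_univ j)
      simpa [hb] using this
    · exact h0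
  have hwexp : 0 ≤ Q b * Real.exp (-(K * N)) := mul_nonneg (hQ0 b) (Real.exp_pos _).le
  have hDlow : Q b * Real.exp (-(K * N)) ≤ D := by
    rcases (mul_nonneg hK0 hN0).eq_or_lt with h0 | h0
    · -- `K = 0`: all rows vanish
      have hK : K = 0 := by
        rcases mul_eq_zero.1 h0.symm with h | h
        · exact h
        · exact absurd h hNpos.ne'
      have hx0 : ∀ i j, x i j = 0 := fun i j => by
        have := hKub i j
        rw [hK] at this
        exact abs_nonpos_iff.1 this
      have e1 : Q b = 0 := by simp [hQ, hessQuad, dotp, hx0]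
      have e2 : D = 0 := by simp [hD, gradComp, hx0]
      rw [e1, e2]; simp
    · have h1 := one_sub_exp_ge (K * N)
      have h2 := mul_le_mul_of_nonneg_left h1 (hQ0 b)
      have h3 : (K * N) * (Q b * Real.exp (-(K * N))) ≤ (K * N) * D := by linarith
      exact le_of_mul_le_mul_left h3 h0
  have hcone : g ≤ ζ * h := by
    have h1 : 0 ≤ 2 * lam1 / (ζ + 1) * (ζ * h - g) := by linarith
    have h2 : 0 < 2 * lam1 / (ζ + 1) := by positivity
    have := nonneg_of_mul_nonneg_right h1 h2
    linarith
  have hhpos : 0 < h := by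
    rcases hh0.eq_or_lt with h0 | h0
    · rw [← h0] at hcone hsplit; linarith
    · exact h0
  have hCle : Cf ≤ Real.sqrt ((H.card : ℝ) * Q b) / h := by
    rw [hCf]
    refine csInf_le ⟨0, ?_⟩ ⟨b, hb0, hcone, rfl⟩
    rintro r ⟨v, -, -, rfl⟩
    exact div_nonneg (Real.sqrt_nonneg _) (sum_nonneg fun _ _ => abs_nonneg _)
  have hlq0 : ∀ v, 0 ≤ lqNorm p q v := fun v =>
    Real.rpow_nonneg (sum_nonneg fun _ _ => Real.rpow_nonneg (abs_nonneg _) _) _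
  have hCqle : Cq ≤ (H.card : ℝ) ^ (1 / q) * Q b / (h * lqNorm p q b) := by
    rw [hCq]
    refine csInf_le ⟨0, ?_⟩ ⟨b, hb0, hcone, rfl⟩
    rintro r ⟨v, -, -, rfl⟩
    exact div_nonneg (mul_nonneg (Real.rpow_nonneg hd0.le _) (hQ0 v))
      (mul_nonneg (sum_nonneg fun _ _ => abs_nonneg _) (hlq0 v))
  -- compatibility
  have hcomp : Cf ^ 2 * h ^ 2 ≤ (H.card : ℝ) * Q b := by
    rw [le_div_iff₀ hhpos] at hCle
    rw [← mul_pow, ← Real.sq_sqrt (mul_nonneg hd0.le (hQ0 b))]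
    exact pow_le_pow_left₀ (by positivity) hCle 2
  have hND : N * D ≤ lam1 * (ζ + 1) * h ^ 2 / 2 := by
    refine (mul_le_mul_of_nonneg_left hDle hN0).trans ?_
    have e : lam1 * (ζ + 1) * h ^ 2 / 2 - N * (2 * lam1 / (ζ + 1) * (ζ * h - g))
        = lam1 / (2 * (ζ + 1)) * ((ζ + 1) * h - 2 * N) ^ 2 := by
      rw [← hsplit]
      field_simp
      ring
    have : 0 ≤ lam1 / (2 * (ζ + 1)) * ((ζ + 1) * h - 2 * N) ^ 2 := by positivity
    linarith
  have hone : 0 ≤ 1 - Real.exp (-(K * N)) := by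
    have : Real.exp (-(K * N)) ≤ 1 := Real.exp_le_one_iff.2 (by nlinarith)
    linarith
  have hstepA : 1 - Real.exp (-(K * N)) ≤ τ := by
    have h1 := mul_le_mul_of_nonneg_right hcomp hone
    have h2 := mul_le_mul_of_nonneg_left hlow hd0.le
    have h3 := mul_le_mul_of_nonneg_left hND (mul_nonneg hd0.le hK0)
    have h4 : h ^ 2 * (Cf ^ 2 * (1 - Real.exp (-(K * N)))) ≤
        h ^ 2 * (K * (ζ + 1) * (H.card : ℝ) * lam1 / 2) := by linarith
    have h5 := le_of_mul_le_mul_left h4 (by positivity)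
    rw [hτ, le_div_iff₀ (by positivity)]
    linarith
  have hwa : K * N ≤ aτ := by
    have h1 := one_sub_exp_ge aτ
    have h2 : aτ * Real.exp (-2 * aτ) ≤ aτ * Real.exp (-aτ) :=
      mul_le_mul_of_nonneg_left (Real.exp_le_exp.2 (by linarith)) haτ0
    have h3 : Real.exp (-aτ) ≤ Real.exp (-(K * N)) := by linarith
    have := Real.exp_le_exp.1 h3
    linarith
  have hfin : Q b * Real.exp (-(2 * aτ)) ≤ 2 * lam1 / (ζ + 1) * (ζ * h) := by
    have h1 : Q b * Real.exp (-(2 * aτ)) ≤ Q b * Real.exp (-(K * N)) :=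
      mul_le_mul_of_nonneg_left (Real.exp_le_exp.2 (by linarith)) (hQ0 b)
    have h2 : 2 * lam1 / (ζ + 1) * (ζ * h - g) ≤ 2 * lam1 / (ζ + 1) * (ζ * h) :=
      mul_le_mul_of_nonneg_left (by linarith) (by positivity)
    linarith
  have hQle : Q b ≤ 2 * lam1 / (ζ + 1) * (ζ * h) * Real.exp (2 * aτ) := by
    rw [Real.exp_neg] at hfin
    rwa [← div_eq_mul_inv, div_le_iff₀ (Real.exp_pos _)] at hfin
  rcases (hlq0 b).eq_or_lt with h0 | h0
  · rw [← h0]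
    have : 0 < ζ := by linarith
    positivity
  rw [le_div_iff₀ (by positivity)] at hCqle
  rw [le_div_iff₀ (by positivity)]
  have hdq : 0 < (H.card : ℝ) ^ (1 / q) := Real.rpow_pos_of_pos hd0 _
  have h1 := mul_le_mul_of_nonneg_left hQle hdq.le
  have h2 : h * (Cq * lqNorm p q b) ≤
      h * ((H.card : ℝ) ^ (1 / q) * (2 * lam1 / (ζ + 1) * ζ * Real.exp (2 * aτ))) := by linarith
  have h3 := le_of_mul_le_mul_left h2 hhpos
  have h4 := mul_le_mul_of_nonneg_left h3 hz1.le
  calc _ = (ζ + 1) * (Cq * lqNorm p q b) := by ring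
    _ ≤ _ := h4
    _ = _ := by field_simp
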